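/- Let p be an odd prime for which 2 is a primitive root modulo p (i.e., 2 has multiplicative order p−1 modulo p), let a ∈ {0,1,…,p−1} and j ∈ {0,1}. Then for every ε > 0 one has T^{(j)}_{p,a}(x) − x/(2p) = Ω(x^{α−ε}); that is, there exist a constant c > 0 and arbitrarily large x with |T^{(j)}_{p,a}(x) − x/(2p)| ≥ c·x^{α−ε}, where α = ln p / ((p−1)·ln 2). (Lower-bound half of Theorem 2.) -/

import Mathlib

/-!
Let `S(x)` be the sum of `(-1) ^ s n` over `n < x`, `n ≡ a (mod p)`. Since the number of `n < x`
with `n ≡ a (mod p)` is `x / p + O(1)`, the discrepancy `T - x / (2 p)` is `± S(x) / 2 + O(1)`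
(`abs_signSum_le`), so it suffices to make `S(x)` large along a sequence of `x`.

Take `x = 2 ^ ((p - 1) M)`, for which `x ^ α = p ^ M`. Expanding the congruence condition in additive
characters of `ZMod p` and using `∑_{n < 2 ^ N} (-1) ^ s n z ^ n = ∏_{k < N} (1 - z ^ (2 ^ k))`
(`sum_sign_mul_pow`), one needs this product at the `p`-th roots of unity `z`. It vanishes at
`z = 1`. At any other `z`, because `2` is a primitive root, the exponents `2 ^ k` run `M` times
through all nonzero residues, and `∏_{0 < i < p} (1 - z ^ i) = p` gives the value `p ^ M`
(`prod_one_sub_pow_two_pow_mul`). Hence `p S(x) = p ^ M (p [a = 0] - 1)` exactly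
(`signSum_two_pow`), so `|S(x)| ≥ x ^ α / p`.
-/

/-- `s n` is the number of 1's in the binary expansion of `n`. -/
def s (n : ℕ) : ℕ := (Nat.digits 2 n).sum

/-- `T m a j x` counts natural numbers `n < x` with `n ≡ a (mod m)` and `s n ≡ j (mod 2)`. -/
def T (m a j x : ℕ) : ℕ :=
  ((Finset.range x).filter (fun n => n % m = a ∧ s n % 2 = j)).card

lemma s_two_mul (n : ℕ) : s (2 * n) = s n := by
  rcases Nat.eq_zero_or_pos n with rfl | hn
  · rfl
  · simp [s, Nat.digits_base_mul (b := 2) (by norm_num) hn]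

lemma s_two_mul_add_one (n : ℕ) : s (2 * n + 1) = s n + 1 := by
  have := Nat.digits_add_two_add_one 0 (2 * n)
  simp only [s]
  rw [this, List.sum_cons]
  have h1 : (2 * n + 1) % (0 + 2) = 1 := by omega
  have h2 : (2 * n + 1) / (0 + 2) = n := by omega
  rw [h1, h2, add_comm]

lemma sum_range_two_mul {R : Type*} [AddCommMonoid R] (f : ℕ → R) (m : ℕ) :
    ∑ n ∈ Finset.range (2 * m), f n = ∑ n ∈ Finset.range m, (f (2 * n) + f (2 * n + 1)) := by
  induction m with
  | zero => simp
  | succ m ih =>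
    rw [Finset.sum_range_succ, ← ih, show 2 * (m + 1) = 2 * m + 1 + 1 by ring,
      Finset.sum_range_succ, Finset.sum_range_succ, add_assoc]

/-- The generating polynomial of the Thue–Morse signs on `[0, 2 ^ N)` factors over binary digits. -/
lemma sum_sign_mul_pow {R : Type*} [CommRing R] (N : ℕ) (z : R) :
    ∑ n ∈ Finset.range (2 ^ N), (-1) ^ s n * z ^ n =
      ∏ k ∈ Finset.range N, (1 - z ^ 2 ^ k) := by
  induction N generalizing z with
  | zero => simp [s]
  | succ N ih =>
    rw [pow_succ', sum_range_two_mul, Finset.prod_range_succ']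
    have h : ∀ k, z ^ 2 ^ (k + 1) = (z ^ 2) ^ 2 ^ k := fun k => by
      rw [← pow_mul, ← pow_succ']
    simp only [h]
    rw [← ih, Finset.sum_mul]
    refine Finset.sum_congr rfl fun n _ => ?_
    rw [s_two_mul, s_two_mul_add_one, ← pow_mul]
    ring

/-- Since `2` is a primitive root, `k ↦ 2 ^ k` runs once through the nonzero residues mod `p`,
so the product is `∏ (1 - z ^ i)` over `1 ≤ i < p`, which is the value at `1` of the
`p`-th cyclotomic polynomial. -/
lemma prod_one_sub_pow_two_pow {p : ℕ} (hp : p.Prime) (hprim : orderOf (2 : ZMod p) = p - 1)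
    {z : ℂ} (hz : IsPrimitiveRoot z p) :
    ∏ k ∈ Finset.range (p - 1), (1 - z ^ 2 ^ k) = (p : ℂ) := by
  have := Fact.mk hp
  have hp2 := hp.two_le
  have two_ne : (2 : ZMod p) ≠ 0 := by
    intro h
    rw [h, orderOf_zero] at hprim
    omega
  obtain ⟨q, rfl⟩ : ∃ q, p = q + 1 := ⟨p - 1, by omega⟩
  have key := hz.prod_one_sub_pow_eq_order
  rw [Nat.add_sub_cancel] at *
  push_cast
  rw [← key]
  have hmod : ∀ k, ((2 ^ k : ℕ) : ZMod (q + 1)) = 2 ^ k := fun k => by push_cast; rfl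
  have hpos : ∀ k, 2 ^ k % (q + 1) ≠ 0 := fun k h => by
    have := (ZMod.natCast_eq_zero_iff (2 ^ k) (q + 1)).2 (Nat.dvd_of_mod_eq_zero h)
    rw [hmod] at this
    exact pow_ne_zero k two_ne this
  have hlt : ∀ k, 2 ^ k % (q + 1) < q + 1 := fun k => Nat.mod_lt _ (by omega)
  have hmaps : ∀ k ∈ Finset.range q, 2 ^ k % (q + 1) - 1 ∈ Finset.range q := fun k _ => by
    have := hpos k
    have := hlt k
    rw [Finset.mem_range]
    omega
  have hinj : Set.InjOn (fun k => 2 ^ k % (q + 1) - 1) (Finset.range q : Set ℕ) := by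
    intro k hk l hl hkl
    have hk0 := hpos k
    have hl0 := hpos l
    have h : 2 ^ k % (q + 1) = 2 ^ l % (q + 1) := by
      simp only at hkl
      omega
    have h' := (ZMod.natCast_eq_natCast_iff' _ _ _).2 h
    rw [hmod, hmod] at h'
    exact pow_injOn_Iio_orderOf (by simpa [hprim] using hk) (by simpa [hprim] using hl) h'
  refine Finset.prod_bij (fun k _ => 2 ^ k % (q + 1) - 1) hmaps
    (fun k hk l hl h => hinj hk hl h) ?_ ?_
  · intro b hb
    obtain ⟨k, hk, h⟩ := Finset.surjOn_of_injOn_of_card_le _ hmaps hinj le_rfl hb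
    exact ⟨k, hk, h⟩
  · intro k _
    rw [Nat.sub_add_cancel (Nat.one_le_iff_ne_zero.2 (hpos k)), ← pow_eq_pow_mod _ hz.pow_eq_one]

lemma prod_one_sub_pow_two_pow_mul {p : ℕ} (hp : p.Prime) (hprim : orderOf (2 : ZMod p) = p - 1)
    {z : ℂ} (hz : IsPrimitiveRoot z p) (M : ℕ) :
    ∏ k ∈ Finset.range ((p - 1) * M), (1 - z ^ 2 ^ k) = (p : ℂ) ^ M := by
  induction M with
  | zero => simp
  | succ M ih =>
    rw [mul_add, mul_one, add_comm, Finset.prod_range_add, prod_one_sub_pow_two_pow hp hprim hz,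
      pow_succ', ← ih]
    congr 1
    refine Finset.prod_congr rfl fun k _ => ?_
    have h : z ^ 2 ^ (p - 1) = z := by
      have h1 : ((2 ^ (p - 1) : ℕ) : ZMod p) = ((1 : ℕ) : ZMod p) := by
        push_cast
        rw [← hprim, pow_orderOf_eq_one]
      have h2 := (ZMod.natCast_eq_natCast_iff' _ _ _).1 h1
      rw [pow_eq_pow_mod _ hz.pow_eq_one, h2, ← pow_eq_pow_mod _ hz.pow_eq_one, pow_one]
    rw [pow_add, pow_mul, h]

/-- The sum of the Thue–Morse signs `(-1) ^ s n` over `n < x` with `n ≡ a (mod p)`. -/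
def signSum (p a x : ℕ) : ℤ :=
  ∑ n ∈ Finset.range x with n % p = a, (-1) ^ s n

/-- The exact value comes from expanding the congruence condition in additive characters: the
trivial character contributes `0`, every other one contributes `p ^ M` times a phase. -/
lemma signSum_two_pow {p : ℕ} (hp : p.Prime) (hprim : orderOf (2 : ZMod p) = p - 1)
    {a : ℕ} (ha : a < p) {M : ℕ} (hM : 0 < M) :
    (p : ℤ) * signSum p a (2 ^ ((p - 1) * M)) = p ^ M * ((if a = 0 then (p : ℤ) else 0) - 1) := by
  have := Fact.mk hp
  have hp2 := hp.two_le
  set ψ : AddChar (ZMod p) ℂ := ZMod.stdAddChar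
  have hψ : ψ.IsPrimitive := ZMod.isPrimitive_stdAddChar p
  have horth : ∀ b : ZMod p, ∑ h, ψ (h * b) = if b = 0 then (p : ℂ) else 0 := fun b => by
    rw [AddChar.sum_mulShift b hψ, ZMod.card]
    push_cast
    rfl
  have hroot : ∀ h : ZMod p, h ≠ 0 → IsPrimitiveRoot (ψ h) p := fun h hh => by
    rw [IsPrimitiveRoot.iff_orderOf]
    refine orderOf_eq_prime ?_ ?_
    · rw [← AddChar.map_nsmul_eq_pow]
      simp
    · intro h1
      exact hh (ZMod.injective_stdAddChar (h1.trans (AddChar.map_zero_eq_one ψ).symm))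
  have hcast : ∀ n : ℕ, n % p = a ↔ (n : ZMod p) - a = 0 := fun n => by
    rw [sub_eq_zero, ZMod.natCast_eq_natCast_iff', Nat.mod_eq_of_lt ha]
  have hzero : (0 : ZMod p) - a = 0 ↔ a = 0 := by
    rw [← Nat.cast_zero (R := ZMod p)]
    simpa [eq_comm] using (hcast 0).symm
  have hfac : ∀ h : ZMod p, ∑ n ∈ Finset.range (2 ^ ((p - 1) * M)),
      (-1 : ℂ) ^ s n * ψ h ^ n = if h = 0 then 0 else (p : ℂ) ^ M := fun h => by
    rw [sum_sign_mul_pow]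
    split_ifs with hh
    · refine Finset.prod_eq_zero (i := 0) ?_ ?_
      · exact Finset.mem_range.2 (Nat.mul_pos (by omega) hM)
      · simp [hh]
    · exact prod_one_sub_pow_two_pow_mul hp hprim (hroot h hh) M
  have main : (p : ℂ) * ((signSum p a (2 ^ ((p - 1) * M)) : ℤ) : ℂ) =
      p ^ M * ((if a = 0 then (p : ℂ) else 0) - 1) := by
    calc (p : ℂ) * ((signSum p a (2 ^ ((p - 1) * M)) : ℤ) : ℂ)
        = ∑ n ∈ Finset.range (2 ^ ((p - 1) * M)),
            (-1 : ℂ) ^ s n * ∑ h, ψ (h * ((n : ZMod p) - a)) := by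
          simp only [horth, signSum, ← hcast]
          push_cast
          rw [Finset.sum_filter, Finset.mul_sum]
          refine Finset.sum_congr rfl fun n _ => ?_
          split_ifs <;> ring
      _ = ∑ h, ψ (h * (0 - a)) * ∑ n ∈ Finset.range (2 ^ ((p - 1) * M)),
            (-1 : ℂ) ^ s n * ψ h ^ n := by
          simp only [Finset.mul_sum]
          rw [Finset.sum_comm]
          refine Finset.sum_congr rfl fun h _ => Finset.sum_congr rfl fun n _ => ?_
          rw [← AddChar.map_nsmul_eq_pow, mul_left_comm, ← AddChar.map_add_eq_mul]
          congr 2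
          rw [nsmul_eq_mul]
          ring
      _ = ∑ h, (p ^ M * ψ (h * (0 - a)) - if h = 0 then (p : ℂ) ^ M else 0) := by
          refine Finset.sum_congr rfl fun h _ => ?_
          rw [hfac]
          split_ifs with hh
          · simp [hh]
          · ring
      _ = _ := by
          rw [Finset.sum_sub_distrib, ← Finset.mul_sum, horth]
          simp only [hzero, Finset.sum_ite_eq', Finset.mem_univ, if_true]
          ring
  have : (((p : ℤ) * signSum p a (2 ^ ((p - 1) * M)) : ℤ) : ℂ) =
      ((p ^ M * ((if a = 0 then (p : ℤ) else 0) - 1) : ℤ) : ℂ) := by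
    push_cast
    exact main
  exact_mod_cast this

lemma pow_le_mul_abs_signSum {p : ℕ} (hp : p.Prime) (hprim : orderOf (2 : ZMod p) = p - 1)
    {a : ℕ} (ha : a < p) {M : ℕ} (hM : 0 < M) :
    (p : ℝ) ^ M ≤ p * |(signSum p a (2 ^ ((p - 1) * M)) : ℝ)| := by
  have h := signSum_two_pow hp hprim ha hM
  have hp2 := hp.two_le
  have h1 : (1 : ℤ) ≤ |(if a = 0 then (p : ℤ) else 0) - 1| := by
    split_ifs
    · rw [abs_of_pos] <;> omega
    · simp
  have h2 : (p : ℤ) ^ M ≤ p * |signSum p a (2 ^ ((p - 1) * M))| := by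
    rw [← Nat.abs_cast p, ← abs_mul, Nat.abs_cast p, h, abs_mul, abs_pow, Nat.abs_cast]
    exact le_mul_of_one_le_right (by positivity) h1
  exact_mod_cast h2

/-- Passing from the counting function to the signed sum, using
`2 * [s n ≡ j] = 1 + (-1) ^ j * (-1) ^ s n`. -/
lemma two_mul_T (p a x : ℕ) {j : ℕ} (hj : j < 2) :
    (2 * T p a j x : ℤ) = Nat.count (fun n => n % p = a) x + (-1) ^ j * signSum p a x := by
  rw [T, signSum, ← Finset.filter_filter, Finset.card_filter, Nat.count_eq_card_filter_range,
    Finset.card_eq_sum_ones]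
  push_cast
  rw [Finset.mul_sum, Finset.mul_sum, ← Finset.sum_add_distrib]
  refine Finset.sum_congr rfl fun n _ => ?_
  rw [neg_one_pow_eq_pow_mod_two (n := s n)]
  have h2 : s n % 2 < 2 := Nat.mod_lt _ (by norm_num)
  interval_cases j <;> interval_cases (s n % 2) <;> simp

lemma abs_count_sub_le {p a : ℕ} (hp : 0 < p) (ha : a < p) (x : ℕ) :
    |(Nat.count (fun n => n % p = a) x : ℝ) - x / p| ≤ 1 := by
  have hc : Nat.count (fun n => n % p = a) x = x / p + if a < x % p then 1 else 0 := by
    have := Nat.count_modEq_card x hp a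
    simpa only [Nat.ModEq, Nat.mod_eq_of_lt ha] using this
  have hx : (x : ℝ) / p = (x / p : ℕ) + (x % p : ℕ) / p := by
    have : (0 : ℝ) < p := by exact_mod_cast hp
    field_simp
    exact_mod_cast (Nat.div_add_mod x p).symm
  have h0 : (0 : ℝ) ≤ (x % p : ℕ) / (p : ℝ) := by positivity
  have h1 : ((x % p : ℕ) : ℝ) / p ≤ 1 :=
    div_le_one_of_le₀ (by exact_mod_cast (Nat.mod_lt x hp).le) (by positivity)
  rw [hc, hx, abs_le]
  push_cast
  split_ifs <;> constructor <;> linarith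

lemma abs_signSum_le {p a j : ℕ} (hp : 0 < p) (ha : a < p) (hj : j < 2) (x : ℕ) :
    |(signSum p a x : ℝ)| ≤ 2 * |(T p a j x : ℝ) - x / (2 * p)| + 1 := by
  have hT : (2 * T p a j x : ℝ) =
      Nat.count (fun n => n % p = a) x + (-1) ^ j * (signSum p a x : ℝ) := by
    exact_mod_cast two_mul_T p a x hj
  have hS : |(signSum p a x : ℝ)| = |(-1) ^ j * (signSum p a x : ℝ)| := by
    rw [abs_mul, abs_pow, abs_neg, abs_one, one_pow, one_mul]
  have hp' : (0 : ℝ) < p := by exact_mod_cast hp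
  have he : (-1) ^ j * (signSum p a x : ℝ) = 2 * ((T p a j x : ℝ) - x / (2 * p)) -
      ((Nat.count (fun n => n % p = a) x : ℝ) - x / p) := by
    have : (2 : ℝ) * (x / (2 * p)) = x / p := by field_simp
    linarith
  rw [hS, he]
  refine (abs_sub _ _).trans ?_
  rw [abs_mul, abs_two]
  linarith [abs_count_sub_le hp ha x]

/-- Lower-bound half of Theorem 2: if `p` is an odd prime for which `2` is a primitive
root, then `T_{p,a}^{(j)}(x) - x/(2p) = Ω(x^{α-ε})` for every `ε > 0`, where
`α = ln p / ((p-1) ln 2)`. -/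
theorem gelfond_exponent_primitive_root_lower
    (p : ℕ) (hp : p.Prime) (hodd : Odd p)
    (hprim : orderOf (2 : ZMod p) = p - 1)
    (a : ℕ) (ha : a < p) (j : ℕ) (hj : j < 2)
    (ε : ℝ) (hε : 0 < ε) :
    ∃ c : ℝ, 0 < c ∧ ∀ X : ℕ, ∃ x : ℕ, X ≤ x ∧
      c * (x : ℝ) ^ (Real.log p / ((p - 1) * Real.log 2) - ε) ≤
        |(T p a j x : ℝ) - x / (2 * p)| := by
  have hp2 := hp.two_le
  have hpR : (2 : ℝ) ≤ p := by exact_mod_cast hp2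
  refine ⟨1 / (4 * p), by positivity, fun X => ⟨2 ^ ((p - 1) * (X + 2)), ?_, ?_⟩⟩
  · calc X ≤ (p - 1) * (X + 2) := by
          have : 1 * (X + 2) ≤ (p - 1) * (X + 2) := Nat.mul_le_mul_right _ (by omega)
          omega
      _ ≤ 2 ^ ((p - 1) * (X + 2)) := Nat.lt_two_pow_self.le
  set M := X + 2 with hM
  have hx1 : (1 : ℝ) ≤ ((2 ^ ((p - 1) * M) : ℕ) : ℝ) := by exact_mod_cast Nat.one_le_two_pow
  -- On this sequence `x ^ α` is exactly `p ^ M`.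
  have hα : ((2 ^ ((p - 1) * M) : ℕ) : ℝ) ^ (Real.log p / ((p - 1) * Real.log 2)) =
      (p : ℝ) ^ M := by
    have hl : Real.log 2 ≠ 0 := (Real.log_pos one_lt_two).ne'
    have hq : (p : ℝ) - 1 ≠ 0 := by linarith
    rw [Real.rpow_def_of_pos (by linarith), ← Real.rpow_natCast (p : ℝ),
      Real.rpow_def_of_pos (by linarith)]
    push_cast [Nat.cast_sub hp.one_le]
    rw [Real.log_pow]
    push_cast [Nat.cast_sub hp.one_le]
    congr 1
    field_simp
  have hle : ((2 ^ ((p - 1) * M) : ℕ) : ℝ) ^ (Real.log p / ((p - 1) * Real.log 2) - ε) ≤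
      (p : ℝ) ^ M := by
    rw [← hα]
    exact Real.rpow_le_rpow_of_exponent_le hx1 (by linarith)
  have hS := pow_le_mul_abs_signSum hp hprim ha (M := M) (by omega)
  have hT := abs_signSum_le hp.pos ha hj (2 ^ ((p - 1) * M))
  -- `M ≥ 2` makes the rounding error `p` at most half of `p ^ M`.
  have hbig : 2 * (p : ℝ) ≤ (p : ℝ) ^ M := by
    calc 2 * (p : ℝ) ≤ p ^ 2 := by nlinarith
      _ ≤ p ^ M := pow_le_pow_right₀ (by linarith) (by omega)
  have h1 := mul_le_mul_of_nonneg_left hT (by linarith : (0 : ℝ) ≤ p)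
  calc _ ≤ 1 / (4 * (p : ℝ)) * p ^ M := mul_le_mul_of_nonneg_left hle (by positivity)
    _ ≤ _ := by
      rw [one_div, inv_mul_le_iff₀ (by positivity)]
      linarith
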